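/- Let X be a metric space, n ≥ 0 an integer, r > 0 and D > 0. Suppose 𝒱₁, …, 𝒱_{n+1} are families of subsets of X such that 𝒱 = 𝒱₁ ∪ … ∪ 𝒱_{n+1} is a cover of X, diam V ≤ D for every V ∈ 𝒱, and each 𝒱ᵢ is 2r-disjoint. Then the family 𝒲 = { N_r(V) : V ∈ 𝒱 }, where N_r(V) = { x ∈ X : dist(x,V) < r } is the open r-neighborhood of V, is a cover of X with diam W ≤ D + 2r for every W ∈ 𝒲, multiplicity at most n+1, and Lebesgue number at least r. -/

import Mathlib

open Metric Set

/-- A set `U` is uniformly bounded by `D`: all pairwise distances are at most `D`. -/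
def UBdd {X : Type*} [MetricSpace X] (D : ℝ) (U : Set X) : Prop :=
  ∀ x ∈ U, ∀ y ∈ U, dist x y ≤ D

/-- A family of subsets covers `X`. -/
def IsCover {X : Type*} (𝒱 : Set (Set X)) : Prop := ∀ x : X, ∃ U ∈ 𝒱, x ∈ U

/-- The cover `𝒱` has Lebesgue number at least `R`: every open `R`-ball is
contained in some member of `𝒱`. -/
def LebAtLeast {X : Type*} [MetricSpace X] (R : ℝ) (𝒱 : Set (Set X)) : Prop :=
  ∀ x : X, ∃ U ∈ 𝒱, Metric.ball x R ⊆ U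

/-- The family `𝒱` has multiplicity at most `m`: every point belongs to at most
`m` members of `𝒱`. -/
def MultAtMost {X : Type*} (m : ℕ) (𝒱 : Set (Set X)) : Prop :=
  ∀ x : X, {U ∈ 𝒱 | x ∈ U}.Finite ∧ {U ∈ 𝒱 | x ∈ U}.ncard ≤ m

/-- The family `𝒱` is `R`-disjoint: points of distinct members are at distance at least `R`. -/
def RDisjoint {X : Type*} [MetricSpace X] (R : ℝ) (𝒱 : Set (Set X)) : Prop :=
  ∀ A ∈ 𝒱, ∀ B ∈ 𝒱, A ≠ B → ∀ a ∈ A, ∀ b ∈ B, R ≤ dist a b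

/-- A map is coarse (bornologous). -/
def Coarse {X Y : Type*} [MetricSpace X] [MetricSpace Y] (f : X → Y) : Prop :=
  ∀ R > (0:ℝ), ∃ S > (0:ℝ), ∀ x x' : X, dist x x' ≤ R → dist (f x) (f x') ≤ S

/-- A map is coarsely `n`-to-`1`: preimages of sets of diameter at most `R` can be covered
by at most `n` sets of diameter at most `S`, where `S` depends only on `R`. -/
def CoarselyNTo1 {X Y : Type*} [MetricSpace X] [MetricSpace Y] (n : ℕ) (f : X → Y) : Prop :=
  ∀ R > (0:ℝ), ∃ S > (0:ℝ), ∀ A : Set Y, UBdd R A →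
    ∃ B : Fin n → Set X, f ⁻¹' A ⊆ ⋃ i, B i ∧ ∀ i, UBdd S (B i)

/-- The star of a set `B` with respect to a family `𝒰`: the union of all members of `𝒰`
meeting `B`. -/
def StarOf {X : Type*} (B : Set X) (𝒰 : Set (Set X)) : Set X :=
  ⋃₀ {U ∈ 𝒰 | (U ∩ B).Nonempty}

/-!
The multiplicity is counted family by family: if `x` lay within `r` of points of two distinct
members of a `2r`-disjoint family, those points would be less than `2r` apart. So each of the
`n + 1` families contributes at most one neighborhood containing `x`. For the Lebesgue number, the
ball of radius `r` around a point of `V` lies in the `r`-neighborhood of `V`.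
-/

section Multiplicity

variable {X ι : Type*}

theorem multAtMost_one_of_pairwiseDisjoint {𝒱 : Set (Set X)} (h : 𝒱.PairwiseDisjoint id) :
    MultAtMost 1 𝒱 := by
  intro x
  have hsub : {U ∈ 𝒱 | x ∈ U}.Subsingleton :=
    fun U hU W hW => h.elim_set hU.1 hW.1 x hU.2 hW.2
  exact ⟨hsub.finite, (ncard_le_one hsub.finite).2 fun _ hU _ hW => hsub hU hW⟩

theorem MultAtMost.iUnion [Fintype ι] {m : ι → ℕ} {𝒱 : ι → Set (Set X)}
    (h : ∀ i, MultAtMost (m i) (𝒱 i)) : MultAtMost (∑ i, m i) (⋃ i, 𝒱 i) := by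
  intro x
  have hunion : {U ∈ ⋃ i, 𝒱 i | x ∈ U} = ⋃ i, {U ∈ 𝒱 i | x ∈ U} := by
    ext U
    simp only [mem_ofPred_eq, mem_iUnion, exists_and_right]
  rw [hunion]
  exact ⟨finite_iUnion fun i => (h i x).1,
    (ncard_iUnion_le_of_fintype _).trans (Finset.sum_le_sum fun i _ => (h i x).2)⟩

end Multiplicity

section Thickening

variable {X : Type*} [MetricSpace X] {𝒱 : Set (Set X)} {U : Set X} {r D : ℝ}

theorem LebAtLeast.isCover (h : LebAtLeast r 𝒱) (hr : 0 < r) : IsCover 𝒱 := fun x =>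
  let ⟨U, hU, hball⟩ := h x
  ⟨U, hU, hball (mem_ball_self hr)⟩

theorem IsCover.lebAtLeast_image_thickening (h : IsCover 𝒱) (r : ℝ) :
    LebAtLeast r (thickening r '' 𝒱) := fun x =>
  let ⟨U, hU, hx⟩ := h x
  ⟨thickening r U, mem_image_of_mem _ hU, ball_subset_thickening hx r⟩

theorem UBdd.thickening (h : UBdd D U) (r : ℝ) : UBdd (D + 2 * r) (thickening r U) := by
  intro x hx y hy
  obtain ⟨u, hu, hxu⟩ := mem_thickening_iff.1 hx
  obtain ⟨v, hv, hyv⟩ := mem_thickening_iff.1 hy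
  calc
    dist x y ≤ dist x u + dist u v + dist v y := dist_triangle4 x u v y
    _ ≤ r + D + r := by
      rw [dist_comm v y]
      gcongr
      exact h u hu v hv
    _ = D + 2 * r := by ring

theorem RDisjoint.pairwiseDisjoint_thickening (h : RDisjoint (2 * r) 𝒱) :
    𝒱.PairwiseDisjoint (thickening r) := by
  intro A hA B hB hAB
  refine disjoint_left.2 fun x hxA hxB => ?_
  obtain ⟨a, ha, hxa⟩ := mem_thickening_iff.1 hxA
  obtain ⟨b, hb, hxb⟩ := mem_thickening_iff.1 hxB
  have hfar : 2 * r ≤ dist a b := h A hA B hB hAB a ha b hb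
  have hnear : dist a b ≤ dist x a + dist x b := dist_triangle_left a b x
  linarith

theorem multAtMost_image_thickening_iUnion {ι : Type*} [Fintype ι] {𝒱 : ι → Set (Set X)}
    (h : ∀ i, RDisjoint (2 * r) (𝒱 i)) :
    MultAtMost (Fintype.card ι) (thickening r '' ⋃ i, 𝒱 i) := by
  have hone (i : ι) : MultAtMost 1 (thickening r '' 𝒱 i) :=
    multAtMost_one_of_pairwiseDisjoint (h i).pairwiseDisjoint_thickening.image
  rw [image_iUnion, Fintype.card_eq_sum_ones]
  exact MultAtMost.iUnion hone

end Thickening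

/-- Expanding each member of a uniformly bounded cover consisting of `n+1` many
`2r`-disjoint families by its open `r`-neighborhood yields a uniformly bounded cover
with multiplicity at most `n+1` and Lebesgue number at least `r`. -/
theorem stmt1 {X : Type*} [MetricSpace X] (n : ℕ) (r D : ℝ) (hr : 0 < r) (hD : 0 < D)
    (V : Fin (n + 1) → Set (Set X))
    (hcover : IsCover (⋃ i, V i))
    (hbdd : ∀ U ∈ ⋃ i, V i, UBdd D U)
    (hdisj : ∀ i, RDisjoint (2 * r) (V i)) :
    IsCover ((fun U => {x : X | ∃ v ∈ U, dist x v < r}) '' (⋃ i, V i)) ∧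
    (∀ W ∈ (fun U => {x : X | ∃ v ∈ U, dist x v < r}) '' (⋃ i, V i), UBdd (D + 2 * r) W) ∧
    MultAtMost (n + 1) ((fun U => {x : X | ∃ v ∈ U, dist x v < r}) '' (⋃ i, V i)) ∧
    LebAtLeast r ((fun U => {x : X | ∃ v ∈ U, dist x v < r}) '' (⋃ i, V i)) := by
  have hnhds : (fun U : Set X => {x : X | ∃ v ∈ U, dist x v < r}) = thickening r :=
    funext fun _ => Set.ext fun _ => mem_thickening_iff.symm
  rw [hnhds]
  have hleb := hcover.lebAtLeast_image_thickening r
  have hmult := multAtMost_image_thickening_iUnion hdisj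
  rw [Fintype.card_fin] at hmult
  exact ⟨hleb.isCover hr, forall_mem_image.2 fun U hU => (hbdd U hU).thickening r, hmult, hleb⟩
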